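/- Let C ⊆ V be a proper cone. The following are equivalent: (1) C is resilient; (2) the pair (C,C') is resilient for every proper cone C' ⊆ V' in every finite-dimensional real vector space V'; (3) the pair (C',C) is resilient for every proper cone C' ⊆ V'. -/

import Mathlib

open scoped TensorProduct
open Set

noncomputable section

/-- The dual cone of a set `C`, inside the algebraic dual space. -/
def dualConeSet {V : Type*} [AddCommGroup V] [Module ℝ V] (C : Set V) :
    Set (Module.Dual ℝ V) := {φ | ∀ x ∈ C, 0 ≤ φ x}

/-- A proper cone: a closed convex cone which is generating (`C - C = V`) and
pointed (`C ∩ (-C) = {0}`). -/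
def IsProperCone {V : Type*} [NormedAddCommGroup V] [NormedSpace ℝ V] (C : Set V) : Prop :=
  IsClosed C ∧ Convex ℝ C ∧ (∀ ⦃c : ℝ⦄, 0 < c → ∀ ⦃x⦄, x ∈ C → c • x ∈ C) ∧
    (∀ v : V, ∃ x ∈ C, ∃ y ∈ C, v = x - y) ∧ C ∩ (-C) = {0}

/-- `(C₁,C₂)`-entanglement breaking maps. -/
def IsEntanglementBreaking {V₁ V₂ : Type*} [AddCommGroup V₁] [Module ℝ V₁]
    [AddCommGroup V₂] [Module ℝ V₂] (C₁ : Set V₁) (C₂ : Set V₂) (P : V₁ →ₗ[ℝ] V₂) : Prop :=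
  ∃ (m : ℕ) (φ : Fin m → Module.Dual ℝ V₁) (x : Fin m → V₂),
    (∀ i, φ i ∈ dualConeSet C₁) ∧ (∀ i, x i ∈ C₂) ∧ ∀ v, P v = ∑ i, φ i v • x i

/-- The `k`-fold minimal tensor power of a cone. -/
def minTensorPow {V : Type*} [AddCommGroup V] [Module ℝ V] (C : Set V) (k : ℕ) :
    Set (⨂[ℝ] _ : Fin k, V) :=
  convexHull ℝ {z | ∃ x : Fin k → V, (∀ i, x i ∈ C) ∧ z = PiTensorProduct.tprod ℝ x}

/-- The functional on the `k`-fold tensor power induced by a family of functionals,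
`x₁ ⊗ ⋯ ⊗ x_k ↦ ∏ i, φ i (x i)`. -/
def dualPairing {V : Type*} [AddCommGroup V] [Module ℝ V] {k : ℕ}
    (φ : Fin k → Module.Dual ℝ V) : (⨂[ℝ] _ : Fin k, V) →ₗ[ℝ] ℝ :=
  PiTensorProduct.lift ((MultilinearMap.mkPiAlgebra ℝ (Fin k) ℝ).compLinearMap φ)

/-- The `k`-fold maximal tensor power of a cone: the dual of the minimal tensor power of
the dual cone, under the canonical identification of `(V^{⊗k})*` with `(V*)^{⊗k}`. -/
def maxTensorPow {V : Type*} [AddCommGroup V] [Module ℝ V] (C : Set V) (k : ℕ) :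
    Set (⨂[ℝ] _ : Fin k, V) :=
  {z | ∀ φ : Fin k → Module.Dual ℝ V, (∀ i, φ i ∈ dualConeSet C) → 0 ≤ dualPairing φ z}

/-- `(C₁,C₂)`-entanglement annihilating maps: `P^{⊗k}` maps the `k`-fold maximal tensor power
of `C₁` into the `k`-fold minimal tensor power of `C₂`, for every `k ≥ 1`. -/
def IsEntanglementAnnihilating {V₁ V₂ : Type*} [AddCommGroup V₁] [Module ℝ V₁]
    [AddCommGroup V₂] [Module ℝ V₂] (C₁ : Set V₁) (C₂ : Set V₂) (P : V₁ →ₗ[ℝ] V₂) : Prop :=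
  ∀ k : ℕ, 1 ≤ k →
    Set.MapsTo (⇑(PiTensorProduct.map fun _ : Fin k => P))
      (maxTensorPow C₁ k) (minTensorPow C₂ k)

/-- A pair of cones is resilient if every entanglement annihilating map between them is
entanglement breaking. -/
def IsResilientPair {V₁ V₂ : Type*} [AddCommGroup V₁] [Module ℝ V₁]
    [AddCommGroup V₂] [Module ℝ V₂] (C₁ : Set V₁) (C₂ : Set V₂) : Prop :=
  ∀ P : V₁ →ₗ[ℝ] V₂, IsEntanglementAnnihilating C₁ C₂ P → IsEntanglementBreaking C₁ C₂ P

/-- The minimal tensor product of two cones. -/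
def minTensor {V W : Type*} [AddCommGroup V] [Module ℝ V] [AddCommGroup W] [Module ℝ W]
    (C : Set V) (D : Set W) : Set (V ⊗[ℝ] W) :=
  convexHull ℝ {z | ∃ x ∈ C, ∃ y ∈ D, z = x ⊗ₜ[ℝ] y}

/-- The maximal tensor product of two cones: the dual of the minimal tensor product of the
dual cones, under the canonical identification of `(V ⊗ W)*` with `V* ⊗ W*`. -/
def maxTensor {V W : Type*} [AddCommGroup V] [Module ℝ V] [AddCommGroup W] [Module ℝ W]
    (C : Set V) (D : Set W) : Set (V ⊗[ℝ] W) :=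
  {z | ∀ φ ∈ dualConeSet C, ∀ ψ ∈ dualConeSet D,
      0 ≤ TensorProduct.dualDistrib ℝ V W (φ ⊗ₜ[ℝ] ψ) z}

/-- The Lorentz cone `L_n ⊆ ℝ ⊕ ℝⁿ`. -/
def lorentzCone (n : ℕ) : Set (ℝ × EuclideanSpace ℝ (Fin n)) := {p | ‖p.2‖ ≤ p.1}


/-!
Under the trace pairing, the dual of the cone of `(C₁, C₂)`-entanglement breaking maps is the cone
of linear maps `R` with `R(C₂) ⊆ C₁`. The former cone is closed, so a map `P` is entanglement
breaking as soon as `tr (R ∘ P) ≥ 0` for all such `R`. If `P` is entanglement annihilating, then so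
are `R ∘ P` as a map from `C₁` to itself and `P ∘ R` as a map from `C₂` to itself. When `C₁`,
respectively `C₂`, is resilient, that composition is entanglement breaking, hence has nonnegative
trace; and `R ∘ P` and `P ∘ R` have the same trace.
-/

section OrderedField

variable {𝕜 E : Type*} [Field 𝕜] [LinearOrder 𝕜] [AddCommGroup E] [Module 𝕜 E]

theorem convex_sdiff_zero_of_salient {K : ConvexCone 𝕜 E} (hK : K.Salient) :
    Convex 𝕜 ((K : Set E) \ {0}) := by
  refine convex_iff_forall_pos.2 fun x hx y hy a b ha hb hab =>
    ⟨K.convex hx.1 hy.1 ha.le hb.le hab, fun hzero => ?_⟩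
  refine hK (a • x) (K.smul_mem ha hx.1) (smul_ne_zero ha.ne' hx.2) ?_
  rw [neg_eq_of_add_eq_zero_right hzero]
  exact K.smul_mem hb hy.1

theorem zero_notMem_convexHull_of_salient {K : ConvexCone 𝕜 E} (hK : K.Salient) {s : Set E}
    (hsK : s ⊆ K) (h0 : (0 : E) ∉ s) : (0 : E) ∉ convexHull 𝕜 s := fun h =>
  (convexHull_min (subset_sdiff_singleton hsK h0) (convex_sdiff_zero_of_salient hK) h).2 rfl

variable [IsStrictOrderedRing 𝕜]

theorem convexHull_eq_biUnion_image_stdSimplex [FiniteDimensional 𝕜 E] (s : Set E) :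
    convexHull 𝕜 s = ⋃ n ∈ Iic (Module.finrank 𝕜 E + 1),
      (fun p : (Fin n → 𝕜) × (Fin n → E) => ∑ i, p.1 i • p.2 i) ''
        (stdSimplex 𝕜 (Fin n) ×ˢ univ.pi fun _ => s) := by
  refine Subset.antisymm (fun x hx => ?_) (iUnion₂_subset fun n _ => ?_)
  · obtain ⟨ι, _, z, w, hz, hindep, hw, hw1, rfl⟩ := eq_pos_convex_span_of_mem_convexHull hx
    have hcard : Fintype.card ι ≤ Module.finrank 𝕜 E + 1 :=
      hindep.card_le_finrank_succ.trans (Nat.succ_le_succ (Submodule.finrank_le _))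
    let e := (Fintype.equivFin ι).symm
    refine mem_iUnion₂.2 ⟨_, hcard, (w ∘ e, z ∘ e), ⟨⟨fun i => (hw _).le, ?_⟩, fun i _ => ?_⟩, ?_⟩
    · rw [← hw1]
      exact e.sum_comp w
    · exact hz (mem_range_self _)
    · exact e.sum_comp fun i => w i • z i
  · rintro _ ⟨⟨w, z⟩, ⟨hw, hz⟩, rfl⟩
    exact (convex_convexHull 𝕜 s).sum_mem (fun i _ => hw.1 i) hw.2
      fun i _ => subset_convexHull 𝕜 s (hz i (mem_univ i))

theorem mem_hull_iff_exists_smul_mem_convexHull {s : Set E} (hs : s.Nonempty) {x : E} :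
    x ∈ PointedCone.hull 𝕜 s ↔ ∃ q ∈ convexHull 𝕜 s, ∃ t : 𝕜, 0 ≤ t ∧ t • q = x := by
  refine ⟨fun hx => ?_, ?_⟩
  · induction hx using Submodule.span_induction with
    | mem x hx => exact ⟨x, subset_convexHull 𝕜 s hx, 1, zero_le_one, one_smul 𝕜 x⟩
    | zero => exact ⟨_, subset_convexHull 𝕜 s hs.some_mem, 0, le_rfl, zero_smul 𝕜 _⟩
    | add x y _ _ hx hy =>
      obtain ⟨p, hp, a, ha, rfl⟩ := hx
      obtain ⟨q, hq, b, hb, rfl⟩ := hy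
      obtain ⟨r, hr, hsum⟩ := (convex_convexHull 𝕜 s).exists_mem_add_smul_eq hp hq ha hb
      exact ⟨r, hr, a + b, add_nonneg ha hb, hsum⟩
    | smul c x _ hx =>
      obtain ⟨q, hq, t, ht, rfl⟩ := hx
      exact ⟨q, hq, c * t, mul_nonneg c.2 ht, mul_smul (c : 𝕜) t q⟩
  · rintro ⟨q, hq, t, ht, rfl⟩
    exact PointedCone.smul_mem _ ht
      (convexHull_min PointedCone.subset_hull (PointedCone.convex _) hq)

end OrderedField

theorem isCompact_convexHull {E : Type*} [AddCommGroup E] [Module ℝ E] [FiniteDimensional ℝ E]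
    [TopologicalSpace E] [ContinuousAdd E] [ContinuousSMul ℝ E] {s : Set E} (hs : IsCompact s) :
    IsCompact (convexHull ℝ s) := by
  rw [convexHull_eq_biUnion_image_stdSimplex]
  refine (finite_Iic _).isCompact_biUnion fun n _ => ?_
  exact ((isCompact_stdSimplex ℝ (Fin n)).prod (isCompact_univ_pi fun _ => hs)).image (by fun_prop)

section ClosedCones

variable {E F : Type*} [NormedAddCommGroup E] [NormedSpace ℝ E]
  [NormedAddCommGroup F] [NormedSpace ℝ F]

theorem isClosed_setOf_exists_sameRay {K : Set E} (hK : IsCompact K) :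
    IsClosed {x | ∃ q ∈ K, SameRay ℝ q x} := by
  have : CompactSpace K := isCompact_iff_compactSpace.1 hK
  have hrays : IsClosed {p : E × K | ‖(p.2 : E)‖ • p.1 = ‖p.1‖ • (p.2 : E)} :=
    isClosed_eq (by fun_prop) (by fun_prop)
  convert isClosedMap_fst_of_compactSpace _ hrays using 1
  ext x
  simp [sameRay_iff_norm_smul_eq]

theorem isClosed_hull_of_isCompact [FiniteDimensional ℝ E] {s : Set E} (hs : IsCompact s)
    (h0 : (0 : E) ∉ convexHull ℝ s) : IsClosed (PointedCone.hull ℝ s : Set E) := by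
  rcases s.eq_empty_or_nonempty with rfl | hne
  · simp
  convert isClosed_setOf_exists_sameRay (isCompact_convexHull hs) using 1
  ext x
  rw [SetLike.mem_coe, mem_hull_iff_exists_smul_mem_convexHull hne]
  refine exists_congr fun q => and_congr_right fun hq => ?_
  exact exists_nonneg_left_iff_sameRay (ne_of_mem_of_not_mem hq h0)

theorem hull_image2_inter_sphere {G : Type*} [AddCommGroup G] [Module ℝ G]
    (A : PointedCone ℝ E) (B : PointedCone ℝ F) (f : E →ₗ[ℝ] F →ₗ[ℝ] G) :
    PointedCone.hull ℝ
        (image2 (fun a b => f a b) (A ∩ Metric.sphere 0 1) (B ∩ Metric.sphere 0 1)) =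
      PointedCone.hull ℝ (image2 (fun a b => f a b) A B) := by
  refine le_antisymm (Submodule.span_mono (image2_subset inter_subset_left inter_subset_left))
    (Submodule.span_le.2 ?_)
  rintro _ ⟨a, ha, b, hb, rfl⟩
  rcases eq_or_ne a 0 with rfl | ha0
  · simp
  rcases eq_or_ne b 0 with rfl | hb0
  · simp
  have hnormalized : f a b = (‖a‖ * ‖b‖) • f (‖a‖⁻¹ • a) (‖b‖⁻¹ • b) := by
    rw [mul_smul, ← map_smul, ← LinearMap.smul_apply, ← map_smul,
      smul_inv_smul₀ (norm_ne_zero_iff.2 ha0), smul_inv_smul₀ (norm_ne_zero_iff.2 hb0)]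
  simp only [SetLike.mem_coe, hnormalized]
  refine PointedCone.smul_mem _ (by positivity)
    (PointedCone.subset_hull ⟨_, ⟨?_, ?_⟩, _, ⟨?_, ?_⟩, rfl⟩)
  · exact A.smul_mem (by positivity) ha
  · simpa using norm_smul_inv_norm (𝕜 := ℝ) ha0
  · exact B.smul_mem (by positivity) hb
  · simpa using norm_smul_inv_norm (𝕜 := ℝ) hb0

theorem isClosed_hull_image2 {G : Type*} [NormedAddCommGroup G] [NormedSpace ℝ G]
    [FiniteDimensional ℝ E] [FiniteDimensional ℝ F] [FiniteDimensional ℝ G]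
    {A : PointedCone ℝ E} (hA : IsClosed (A : Set E))
    {B : PointedCone ℝ F} (hB : IsClosed (B : Set F)) (f : E →L[ℝ] F →L[ℝ] G)
    (hf : ∀ a ∈ A, ∀ b ∈ B, f a b = 0 → a = 0 ∨ b = 0)
    (hsalient : (PointedCone.hull ℝ (image2 (fun a b => f a b) A B)).toConvexCone.Salient) :
    IsClosed (PointedCone.hull ℝ (image2 (fun a b => f a b) A B) : Set G) := by
  let normalized : Set G :=
    image2 (fun a b => f a b) (A ∩ Metric.sphere 0 1) (B ∩ Metric.sphere 0 1)
  have hhull : PointedCone.hull ℝ normalized = PointedCone.hull ℝ (image2 (fun a b => f a b) A B) :=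
    hull_image2_inter_sphere A B f.toLinearMap₁₂
  rw [← hhull]
  refine isClosed_hull_of_isCompact ?_ (zero_notMem_convexHull_of_salient hsalient ?_ ?_)
  · have hdomain := ((isCompact_sphere (0 : E) 1).inter_left hA).prod
      ((isCompact_sphere (0 : F) 1).inter_left hB)
    change IsCompact (image2 _ _ _)
    rw [← image_uncurry_prod]
    exact hdomain.image (by fun_prop)
  · exact (image2_subset inter_subset_left inter_subset_left).trans PointedCone.subset_hull
  · rintro ⟨a, ⟨haA, ha⟩, b, ⟨hbB, hb⟩, hab⟩
    rcases hf a haA b hbB hab with rfl | rfl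
    · simp at ha
    · simp at hb

end ClosedCones

open LinearMap in
theorem exists_forall_eq_trace_comp {R M N : Type*} [CommRing R] [AddCommGroup M] [Module R M]
    [Module.Free R M] [Module.Finite R M] [AddCommGroup N] [Module R N]
    (L : Module.Dual R (M →ₗ[R] N)) : ∃ T : N →ₗ[R] M, ∀ P, L P = trace R M (T ∘ₗ P) := by
  let T : N →ₗ[R] M := (Module.evalEquiv R M).symm.toLinearMap ∘ₗ (smulRightₗ.compr₂ L).flip
  have apply_T (φ : Module.Dual R M) (x : N) : φ (T x) = L (φ.smulRight x) :=
    Module.apply_evalEquiv_symm_apply R M φ _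
  refine ⟨T, fun P => ?_⟩
  obtain ⟨z, rfl⟩ := dualTensorHom_bijective.2 P
  induction z with
  | zero => simp
  | add y z hy hz => simp only [map_add, comp_add, hy, hz]
  | tmul φ x =>
    have hcomp : T ∘ₗ φ.smulRight x = φ.smulRight (T x) := by ext; simp
    change L (φ.smulRight x) = trace R M (T ∘ₗ φ.smulRight x)
    rw [hcomp, trace_smulRight, apply_T]

section EntanglementBreaking

theorem IsEntanglementBreaking.trace_nonneg {V : Type*} [AddCommGroup V] [Module ℝ V]
    [FiniteDimensional ℝ V] {C : Set V} {P : V →ₗ[ℝ] V} (hP : IsEntanglementBreaking C C P) :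
    0 ≤ LinearMap.trace ℝ V P := by
  obtain ⟨m, φ, x, hφ, hx, hP⟩ := hP
  have hsum : P = ∑ i, (φ i).smulRight (x i) := by
    ext v
    simp [hP]
  rw [hsum, map_sum]
  refine Finset.sum_nonneg fun i _ => ?_
  rw [LinearMap.trace_smulRight]
  exact hφ i _ (hx i)

variable {V₁ V₂ : Type*} [NormedAddCommGroup V₁] [NormedSpace ℝ V₁]
  [NormedAddCommGroup V₂] [NormedSpace ℝ V₂]

/-- The cone of entanglement breaking maps, generated by the rank-one maps `v ↦ φ v • x` with
`φ ∈ C₁*` and `x ∈ C₂`. It lives in the space of continuous linear maps because that space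
carries the topology needed for separation. -/
def entanglementBreakingCone (C₁ : Set V₁) (C₂ : Set V₂) : PointedCone ℝ (V₁ →L[ℝ] V₂) :=
  PointedCone.hull ℝ
    (image2 (fun (φ : V₁ →L[ℝ] ℝ) (x : V₂) => φ.smulRight x)
      (PointedCone.dual (topDualPairing ℝ V₁).flip C₁) C₂)

theorem mem_entanglementBreakingCone_iff [FiniteDimensional ℝ V₁] {C₁ : Set V₁} {C₂ : Set V₂}
    {P : V₁ →L[ℝ] V₂} :
    P ∈ entanglementBreakingCone C₁ C₂ ↔ IsEntanglementBreaking C₁ C₂ P.toLinearMap := by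
  constructor
  · intro hP
    obtain ⟨m, c, T, rfl⟩ := Submodule.mem_span_set'.1 hP
    choose φ hφ x hx hT using fun i => (T i).2
    refine ⟨m, fun i => (c i : ℝ) • (φ i).toLinearMap, x, fun i v hv => ?_, hx, fun v => ?_⟩
    · exact mul_nonneg (c i).2 (hφ i hv)
    · simp only [← hT, sum_apply, ContinuousLinearMap.coe_coe]
      exact Finset.sum_congr rfl fun i _ => (mul_smul (c i : ℝ) (φ i v) (x i)).symm
  · rintro ⟨m, φ, x, hφ, hx, hP⟩
    have hsum : P = ∑ i, (LinearMap.toContinuousLinearMap (φ i)).smulRight (x i) := by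
      ext v
      simpa using hP v
    rw [hsum]
    exact Submodule.sum_mem _ fun i _ =>
      PointedCone.subset_hull ⟨_, fun v hv => hφ i v hv, x i, hx i, rfl⟩

theorem mapsTo_of_mem_entanglementBreakingCone {C₁ : Set V₁} {C₂ : PointedCone ℝ V₂}
    {P : V₁ →L[ℝ] V₂} (hP : P ∈ entanglementBreakingCone C₁ C₂) : MapsTo P C₁ C₂ := by
  intro v hv
  induction hP using Submodule.span_induction with
  | mem P hP =>
    obtain ⟨φ, hφ, x, hx, rfl⟩ := hP
    exact C₂.smul_mem (hφ hv) hx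
  | zero => exact C₂.zero_mem
  | add P Q _ _ hP hQ => exact C₂.add_mem hP hQ
  | smul c P _ hP => exact C₂.smul_mem c.2 hP

theorem salient_entanglementBreakingCone {C₁ : Set V₁} (hgen : Submodule.span ℝ C₁ = ⊤)
    {C₂ : PointedCone ℝ V₂} (hsalient : C₂.toConvexCone.Salient) :
    (entanglementBreakingCone C₁ (C₂ : Set V₂)).toConvexCone.Salient := by
  intro P hP hP0 hnegP
  refine hP0 (ContinuousLinearMap.coe_injective (LinearMap.ext_on hgen fun v hv => ?_))
  by_contra hPv
  exact hsalient (P v) (mapsTo_of_mem_entanglementBreakingCone hP hv) hPv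
    (mapsTo_of_mem_entanglementBreakingCone hnegP hv)

variable [FiniteDimensional ℝ V₁] [FiniteDimensional ℝ V₂]

theorem isClosed_entanglementBreakingCone {C₁ : Set V₁} (hgen : Submodule.span ℝ C₁ = ⊤)
    {C₂ : ProperCone ℝ V₂} (hsalient : C₂.toPointedCone.toConvexCone.Salient) :
    IsClosed (entanglementBreakingCone C₁ (C₂ : Set V₂) : Set (V₁ →L[ℝ] V₂)) := by
  refine isClosed_hull_image2 (PointedCone.isClosed_dual fun v => ?_) C₂.isClosed
    (ContinuousLinearMap.smulRightL ℝ V₁ V₂) (fun φ _ x _ h => ?_)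
    (salient_entanglementBreakingCone hgen hsalient)
  · exact (ContinuousLinearMap.apply ℝ ℝ v).continuous
  · have hnorm : ‖φ‖ * ‖x‖ = 0 := by
      rw [← ContinuousLinearMap.norm_smulRight_apply]
      exact norm_eq_zero.2 h
    exact (mul_eq_zero.1 hnorm).imp norm_eq_zero.1 norm_eq_zero.1

theorem isEntanglementBreaking_of_forall_trace_comp_nonneg {C₁ : ProperCone ℝ V₁}
    (hgen : Submodule.span ℝ (C₁ : Set V₁) = ⊤) {C₂ : ProperCone ℝ V₂}
    (hsalient : C₂.toPointedCone.toConvexCone.Salient) {P : V₁ →ₗ[ℝ] V₂}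
    (hP : ∀ R : V₂ →ₗ[ℝ] V₁, MapsTo R C₂ C₁ → 0 ≤ LinearMap.trace ℝ V₁ (R ∘ₗ P)) :
    IsEntanglementBreaking (C₁ : Set V₁) C₂ P := by
  let K : ProperCone ℝ (V₁ →L[ℝ] V₂) :=
    ⟨entanglementBreakingCone C₁ C₂, isClosed_entanglementBreakingCone hgen hsalient⟩
  suffices hPK : LinearMap.toContinuousLinearMap P ∈ K from mem_entanglementBreakingCone_iff.1 hPK
  by_contra hPK
  obtain ⟨L, hLK, hLP⟩ := K.hyperplane_separation_point hPK
  obtain ⟨R, hLR⟩ := exists_forall_eq_trace_comp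
    (L.toLinearMap ∘ₗ LinearMap.toContinuousLinearMap.toLinearMap)
  refine hLP.not_ge ((hP R fun x hx => ?_).trans_eq (hLR P).symm)
  by_contra hRx
  obtain ⟨φ, hφ, hφRx⟩ := C₁.hyperplane_separation_point hRx
  have hLφx : L (φ.smulRight x) = φ (R x) := by
    have hcomp : R ∘ₗ φ.toLinearMap.smulRight x = φ.toLinearMap.smulRight (R x) := by ext; simp
    have htrace := hLR (φ.toLinearMap.smulRight x)
    rw [hcomp, LinearMap.trace_smulRight] at htrace
    exact htrace
  exact hφRx.not_ge (hLφx ▸ hLK _ (PointedCone.subset_hull ⟨φ, hφ, x, hx, rfl⟩))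

end EntanglementBreaking

section EntanglementAnnihilating

variable {V W : Type*} [AddCommGroup V] [Module ℝ V] [AddCommGroup W] [Module ℝ W]
  {C : Set V} {D : Set W} {Q : V →ₗ[ℝ] W}

theorem mapsTo_map_minTensorPow (hQ : MapsTo Q C D) (k : ℕ) :
    MapsTo (PiTensorProduct.map fun _ : Fin k => Q) (minTensorPow C k) (minTensorPow D k) := by
  rw [mapsTo_iff_image_subset, minTensorPow, LinearMap.image_convexHull]
  refine convexHull_mono ?_
  rintro _ ⟨_, ⟨x, hx, rfl⟩, rfl⟩
  exact ⟨fun i => Q (x i), fun i => hQ (hx i), PiTensorProduct.map_tprod _ x⟩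

theorem dualPairing_comp_map {k : ℕ} (φ : Fin k → Module.Dual ℝ W) (Q : V →ₗ[ℝ] W) :
    dualPairing φ ∘ₗ PiTensorProduct.map (fun _ => Q) = dualPairing fun i => φ i ∘ₗ Q := by
  ext x
  simp [dualPairing]

theorem mapsTo_map_maxTensorPow (hQ : MapsTo Q C D) (k : ℕ) :
    MapsTo (PiTensorProduct.map fun _ : Fin k => Q) (maxTensorPow C k) (maxTensorPow D k) := by
  intro z hz φ hφ
  rw [← LinearMap.comp_apply, dualPairing_comp_map]
  exact hz _ fun i x hx => hφ i _ (hQ hx)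

variable {U : Type*} [AddCommGroup U] [Module ℝ U] {B : Set U}

theorem IsEntanglementAnnihilating.postcomp {P : U →ₗ[ℝ] V} (hP : IsEntanglementAnnihilating B C P)
    (hQ : MapsTo Q C D) : IsEntanglementAnnihilating B D (Q ∘ₗ P) := by
  intro k hk
  rw [PiTensorProduct.map_comp, LinearMap.coe_comp]
  exact (mapsTo_map_minTensorPow hQ k).comp (hP k hk)

theorem IsEntanglementAnnihilating.precomp {P : W →ₗ[ℝ] U} (hP : IsEntanglementAnnihilating D B P)
    (hQ : MapsTo Q C D) : IsEntanglementAnnihilating C B (P ∘ₗ Q) := by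
  intro k hk
  rw [PiTensorProduct.map_comp, LinearMap.coe_comp]
  exact (hP k hk).comp (mapsTo_map_maxTensorPow hQ k)

end EntanglementAnnihilating

section Resilience

variable {V V' : Type*} [NormedAddCommGroup V] [NormedSpace ℝ V] [FiniteDimensional ℝ V]
  [NormedAddCommGroup V'] [NormedSpace ℝ V'] [FiniteDimensional ℝ V']
  {C : ProperCone ℝ V} {C' : ProperCone ℝ V'}

theorem IsResilientPair.of_self_left (h : IsResilientPair (C : Set V) (C : Set V))
    (hgen : Submodule.span ℝ (C : Set V) = ⊤)
    (hsalient : C'.toPointedCone.toConvexCone.Salient) :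
    IsResilientPair (C : Set V) (C' : Set V') :=
  fun _ hP => isEntanglementBreaking_of_forall_trace_comp_nonneg hgen hsalient fun _ hR =>
    (h _ (hP.postcomp hR)).trace_nonneg

theorem IsResilientPair.of_self_right (h : IsResilientPair (C : Set V) (C : Set V))
    (hgen : Submodule.span ℝ (C' : Set V') = ⊤)
    (hsalient : C.toPointedCone.toConvexCone.Salient) : IsResilientPair (C' : Set V') (C : Set V) :=
  fun P hP => isEntanglementBreaking_of_forall_trace_comp_nonneg hgen hsalient fun R hR => by
    rw [LinearMap.trace_comp_comm']
    exact (h _ (hP.precomp hR)).trace_nonneg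

end Resilience

/-- Mathlib's `ProperCone` is a closed convex cone containing `0`: unlike `IsProperCone`, it need be
neither generating nor salient. -/
theorem IsProperCone.exists_eq_properCone {V : Type*} [NormedAddCommGroup V] [NormedSpace ℝ V]
    {C : Set V} (hC : IsProperCone C) :
    ∃ K : ProperCone ℝ V, C = K ∧ Submodule.span ℝ (K : Set V) = ⊤ ∧
      K.toPointedCone.toConvexCone.Salient := by
  obtain ⟨hclosed, hconvex, hsmul, hgen, hpointed⟩ := hC
  have hzero : (0 : V) ∈ C := (hpointed.ge rfl).1
  have hadd : ∀ x ∈ C, ∀ y ∈ C, x + y ∈ C := fun x hx y hy => by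
    have hmid := hsmul zero_lt_two (hconvex.midpoint_mem hx hy)
    rwa [midpoint_eq_smul_add, smul_smul, invOf_eq_inv, mul_inv_cancel₀ two_ne_zero, one_smul]
      at hmid
  let convexCone : ConvexCone ℝ V :=
    { carrier := C
      smul_mem' := fun _ hc _ hx => hsmul hc hx
      add_mem' := fun _ hx _ hy => hadd _ hx _ hy }
  let K : ProperCone ℝ V := ⟨convexCone.toPointedCone hzero, hclosed⟩
  refine ⟨K, rfl, ?_, ?_⟩
  · refine eq_top_iff.2 fun v _ => ?_
    obtain ⟨x, hx, y, hy, rfl⟩ := hgen v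
    exact Submodule.sub_mem _ (Submodule.subset_span hx) (Submodule.subset_span hy)
  · exact (PointedCone.salient_iff_inter_neg_eq_singleton K.toPointedCone).2 hpointed

/-- **Lemma (resilience implies resilience of pairs).** A proper cone `C` is resilient iff
`(C, C')` is resilient for every proper cone `C'`, iff `(C', C)` is resilient for every
proper cone `C'`. -/
theorem resilient_iff_resilient_pairs
    {V : Type} [NormedAddCommGroup V] [NormedSpace ℝ V] [FiniteDimensional ℝ V]
    (C : Set V) (hC : IsProperCone C) :
    (IsResilientPair C C ↔
      ∀ (V' : Type) [NormedAddCommGroup V'] [NormedSpace ℝ V'] [FiniteDimensional ℝ V'],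
        ∀ C' : Set V', IsProperCone C' → IsResilientPair C C') ∧
    (IsResilientPair C C ↔
      ∀ (V' : Type) [NormedAddCommGroup V'] [NormedSpace ℝ V'] [FiniteDimensional ℝ V'],
        ∀ C' : Set V', IsProperCone C' → IsResilientPair C' C) := by
  obtain ⟨K, rfl, hgen, hsalient⟩ := hC.exists_eq_properCone
  refine ⟨⟨fun h V' _ _ _ C' hC' => ?_, fun h => h V K hC⟩,
    ⟨fun h V' _ _ _ C' hC' => ?_, fun h => h V K hC⟩⟩
  · obtain ⟨K', rfl, -, hsalient'⟩ := hC'.exists_eq_properCone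
    exact IsResilientPair.of_self_left h hgen hsalient'
  · obtain ⟨K', rfl, hgen', -⟩ := hC'.exists_eq_properCone
    exact IsResilientPair.of_self_right h hgen' hsalient

end
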